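/- The interchange law holds in the probabilistic automata model with respect to simulation: for probabilistic automata P, Q, P', Q' (with P, P' and Q, Q' having pairwise disjoint state spaces) and any frame A ⊆ E, (P ∥_A Q) · (P' ∥_A Q') ≤ (P · P') ∥_A (Q · Q'). -/

import Mathlib

open scoped ENNReal

namespace PCKA

/-- A probabilistic automaton over the (non-silent) action alphabet `α`, with state
space `σ`.  Transition labels are `Option α`, where `none` plays the role of the
silent action `τ`; `trans x a μ` means `x —a→ μ` where `μ` is a (countably
supported) probability distribution over states, `init` is the initial
distribution and `final` the set of final states. -/
structure PAut (α : Type) (σ : Type) where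
  trans : σ → Option α → PMF σ → Prop
  init : PMF σ
  final : Set σ

/-- The lifting `S̄ ⊆ D(X) × D(Y)` of a relation `S ⊆ X × D(Y)`: `μ S̄ ν` iff there
are weights `p n` summing to `1`, states `x n` and distributions `νs n` with
`μ = Σ_n p n · δ_{x n}`, `x n S νs n` for each `n`, and `ν = Σ_n p n · νs n`. -/
def Lift {X Y : Type} (S : X → PMF Y → Prop) (μ : PMF X) (ν : PMF Y) : Prop :=
  ∃ (p : ℕ → ℝ≥0∞) (x : ℕ → X) (νs : ℕ → PMF Y),
    (∑' n, p n) = 1 ∧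
    (∀ s, μ s = ∑' n, p n * (PMF.pure (x n)) s) ∧
    (∀ n, S (x n) (νs n)) ∧
    (∀ t, ν t = ∑' n, p n * (νs n) t)

/-- The double lifting `T̿ ⊆ D(X) × D(Z)` of a relation `T ⊆ X × Z`, via a weight
function `w`. -/
def DLift {X Z : Type} (T : X → Z → Prop) (μ : PMF X) (ψ : PMF Z) : Prop :=
  ∃ w : X → Z → ℝ≥0∞,
    (∀ x z, 0 < w x z → T x z) ∧
    (∀ x, (∑' z, w x z) = μ x) ∧
    (∀ z, (∑' x, w x z) = ψ z)

/-- Flattening `π : D(D(Y)) → D(Y)`, `π(ψ) = Σ_{ν} ψ(ν)·ν`. -/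
noncomputable def flat {Y : Type} (ψ : PMF (PMF Y)) : PMF Y := ψ.bind id

/-- Single transition step, with the τ-transitions extended by reflexivity
(`x —τ→ δ_x` is always allowed). -/
def step {α σ : Type} (P : PAut α σ) (a : Option α) (x : σ) (μ : PMF σ) : Prop :=
  P.trans x a μ ∨ (a = none ∧ μ = PMF.pure x)

/-- Weak internal moves `⇒`: the reflexive-transitive closure of the lifted
(extended) τ-transition relation on distributions. -/
def WeakTau {α σ : Type} (P : PAut α σ) : PMF σ → PMF σ → Prop :=
  Relation.ReflTransGen (Lift (step P none))

/-- Weak `a`-transition `μ ⇒^a μ'`: `μ ⇒ μ₁ —ā→ μ₂ ⇒ μ'`. -/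
def WeakStep {α σ : Type} (P : PAut α σ) (a : Option α) (μ μ' : PMF σ) : Prop :=
  ∃ μ₁ μ₂, WeakTau P μ μ₁ ∧ Lift (step P a) μ₁ μ₂ ∧ WeakTau P μ₂ μ'

/-- A probabilistic simulation from `P` to `Q` (Deng et al. style). -/
structure IsSimulation {α σ τ' : Type} (P : PAut α σ) (Q : PAut α τ')
    (S : σ → PMF τ' → Prop) : Prop where
  init : ∃ ν₀', WeakTau Q Q.init ν₀' ∧ Lift S P.init ν₀'
  step : ∀ x a μ', P.trans x a μ' → ∀ ν, S x ν →
    ∃ ν', WeakStep Q a ν ν' ∧ Lift S μ' ν'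
  final : ∀ x ν, x ∈ P.final → S x ν →
    ∃ ν', WeakTau Q ν ν' ∧ ∀ y ∈ ν'.support, y ∈ Q.final

/-- A probabilistic weak forward simulation from `P` to `Q` (Segala style). -/
structure IsWFSimulation {α σ τ' : Type} (P : PAut α σ) (Q : PAut α τ')
    (S : σ → PMF τ' → Prop) : Prop where
  init : ∃ ψ₀ : PMF (PMF τ'), DLift S P.init ψ₀ ∧ WeakTau Q Q.init (flat ψ₀)
  step : ∀ x a μ', P.trans x a μ' → ∀ ν, S x ν →
    ∃ ψ : PMF (PMF τ'), WeakStep Q a ν (flat ψ) ∧ DLift S μ' ψ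
  final : ∀ x ν, x ∈ P.final → S x ν →
    ∃ ψ : PMF (PMF τ'), (∀ ρ ∈ ψ.support, ∀ y ∈ ρ.support, y ∈ Q.final) ∧
      WeakTau Q ν (flat ψ)

/-- `P ≤ Q`: there exists a probabilistic simulation from `P` to `Q`. -/
def Sim {α σ τ' : Type} (P : PAut α σ) (Q : PAut α τ') : Prop :=
  ∃ S, IsSimulation P Q S

/-- Simulation equivalence `P ≡ Q`. -/
def SimEquiv {α σ τ' : Type} (P : PAut α σ) (Q : PAut α τ') : Prop :=
  Sim P Q ∧ Sim Q P

/-- Convex combination `p·μ + (1−p)·ν` of two distributions. -/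
noncomputable def mix {X : Type} (p : ℝ≥0∞) (hp : p ≤ 1) (μ ν : PMF X) : PMF X :=
  ⟨fun x => p * μ x + (1 - p) * ν x, by
    refine ENNReal.summable.hasSum_iff.mpr ?_
    rw [ENNReal.tsum_add, ENNReal.tsum_mul_left, ENNReal.tsum_mul_left,
      μ.tsum_coe, ν.tsum_coe, mul_one, mul_one, add_tsub_cancel_of_le hp]⟩

/-- Product distribution `μ × ν`, with `(μ × ν)(x,y) = μ(x)·ν(y)`. -/
noncomputable def pprod {X Y : Type} (μ : PMF X) (ν : PMF Y) : PMF (X × Y) :=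
  μ.bind fun x => ν.map fun y => (x, y)

/-- The skip automaton `1`: one state, no transitions, that state is final. -/
noncomputable def skip (α : Type) : PAut α Unit :=
  ⟨fun _ _ _ => False, PMF.pure (), Set.univ⟩

/-- The deadlock automaton `0`: one state, no transitions, no final state. -/
noncomputable def deadlock (α : Type) : PAut α Unit :=
  ⟨fun _ _ _ => False, PMF.pure (), ∅⟩

/-- Nondeterministic choice `P + Q`: disjoint union of the two automata (realised
by the sum type) plus a fresh initial state `z = none` with `z —τ→ μ₀` and
`z —τ→ ν₀`. -/
noncomputable def nchoice {α σ τ' : Type} (P : PAut α σ) (Q : PAut α τ') :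
    PAut α (Option (σ ⊕ τ')) where
  trans := fun s a μ =>
    match s with
    | none => a = none ∧
        (μ = P.init.map (fun x => some (Sum.inl x)) ∨
         μ = Q.init.map (fun y => some (Sum.inr y)))
    | some (Sum.inl x) => ∃ μ', P.trans x a μ' ∧ μ = μ'.map (fun x => some (Sum.inl x))
    | some (Sum.inr y) => ∃ ν', Q.trans y a ν' ∧ μ = ν'.map (fun y => some (Sum.inr y))
  init := PMF.pure none
  final := {s | (∃ x ∈ P.final, s = some (Sum.inl x)) ∨ (∃ y ∈ Q.final, s = some (Sum.inr y))}

/-- Sequential composition `P · Q`: disjoint union (realised by the sum type),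
with a τ-transition from each final state of `P` to the initial distribution of
`Q`; initial distribution that of `P`, final states those of `Q`. -/
noncomputable def pseq {α σ τ' : Type} (P : PAut α σ) (Q : PAut α τ') :
    PAut α (σ ⊕ τ') where
  trans := fun s a μ =>
    match s with
    | Sum.inl x =>
        (∃ μ', P.trans x a μ' ∧ μ = μ'.map Sum.inl) ∨
        (a = none ∧ x ∈ P.final ∧ μ = Q.init.map Sum.inr)
    | Sum.inr y => ∃ ν', Q.trans y a ν' ∧ μ = ν'.map Sum.inr
  init := P.init.map Sum.inl
  final := {s | ∃ y ∈ Q.final, s = Sum.inr y}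

/-- Kleene star `P*`: a fresh state `z = none` which is initial and the only
final state, with `z —τ→ μ₀` and `x —τ→ δ_z` for each final state `x` of `P`. -/
noncomputable def pstar {α σ : Type} (P : PAut α σ) : PAut α (Option σ) where
  trans := fun s a μ =>
    match s with
    | none => a = none ∧ μ = P.init.map some
    | some x =>
        (∃ μ', P.trans x a μ' ∧ μ = μ'.map some) ∨
        (a = none ∧ x ∈ P.final ∧ μ = PMF.pure none)
  init := PMF.pure none
  final := {none}

/-- Probabilistic choice `P ⊕_p Q`: disjoint union with initial distribution
`p·μ₀ + (1−p)·ν₀`. -/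
noncomputable def pchoice {α σ τ' : Type} (p : ℝ≥0∞) (hp : p ≤ 1)
    (P : PAut α σ) (Q : PAut α τ') : PAut α (σ ⊕ τ') where
  trans := fun s a μ =>
    match s with
    | Sum.inl x => ∃ μ', P.trans x a μ' ∧ μ = μ'.map Sum.inl
    | Sum.inr y => ∃ ν', Q.trans y a ν' ∧ μ = ν'.map Sum.inr
  init := mix p hp (P.init.map Sum.inl) (Q.init.map Sum.inr)
  final := {s | (∃ x ∈ P.final, s = Sum.inl x) ∨ (∃ y ∈ Q.final, s = Sum.inr y)}

/-- CSP-style parallel composition `P ∥_A Q` synchronising on the frame `A`: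
actions in `A` must be performed jointly, all other actions (including τ) are
interleaved. -/
noncomputable def par {α σ τ' : Type} (A : Set α) (P : PAut α σ) (Q : PAut α τ') :
    PAut α (σ × τ') where
  trans := fun s a μπ => ∃ μ ν, μπ = pprod μ ν ∧
    ((∃ b ∈ A, a = some b ∧ P.trans s.1 a μ ∧ Q.trans s.2 a ν) ∨
     ((∀ b ∈ A, a ≠ some b) ∧ P.trans s.1 a μ ∧ ν = PMF.pure s.2) ∨
     ((∀ b ∈ A, a ≠ some b) ∧ Q.trans s.2 a ν ∧ μ = PMF.pure s.1))
  init := pprod P.init Q.init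
  final := {s | s.1 ∈ P.final ∧ s.2 ∈ Q.final}

/-- A distribution lifts to its bind along a pointwise related family. -/
theorem lift_bind {X Y : Type} (S : X → PMF Y → Prop) (μ : PMF X) (g : X → PMF Y)
    (h : ∀ x ∈ μ.support, S x (g x)) : Lift S μ (μ.bind g) := by
  classical
  obtain ⟨x0, hx0⟩ := μ.support_nonempty
  have hc : Countable μ.support := μ.support_countable.to_subtype
  obtain ⟨e, he⟩ := hc.exists_injective_nat
  let p : ℕ → ℝ≥0∞ := Function.extend e (fun x => μ x) 0
  let x : ℕ → X := Function.extend e Subtype.val (fun _ => x0)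
  have key : ∀ k : X → ℝ≥0∞, (∑' n, p n * k (x n)) = ∑' s, μ s * k s := by
    intro k
    have h1 : (∑' s : μ.support, (fun n => p n * k (x n)) (e s)) = ∑' n, p n * k (x n) := by
      refine he.tsum_eq (f := fun n => p n * k (x n)) ?_
      intro n hn
      by_contra hne
      apply hn
      have : p n = 0 := Function.extend_apply' _ _ _ hne
      simp [this]
    rw [← h1]
    have h2 : ∀ s : μ.support, (fun n => p n * k (x n)) (e s) = μ s * k s := by
      intro s
      simp only [p, x, he.extend_apply]
    simp only [h2]
    refine tsum_subtype_eq_of_support_subset (f := fun s => μ s * k s) ?_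
    intro s hs
    rw [PMF.mem_support_iff]
    intro h0
    exact hs (by simp [h0])
  have hx : ∀ n, x n ∈ μ.support := by
    intro n
    by_cases hn : ∃ s, e s = n
    · obtain ⟨s, rfl⟩ := hn
      simp only [x, he.extend_apply]
      exact s.2
    · have : x n = x0 := Function.extend_apply' _ _ _ hn
      rw [this]; exact hx0
  refine ⟨p, x, fun n => g (x n), ?_, ?_, fun n => h _ (hx n), ?_⟩
  · simpa using key (fun _ => 1)
  · intro s
    rw [key (fun y => PMF.pure y s)]
    have := congrArg (fun q : PMF X => q s) (PMF.bind_pure μ)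
    simpa only [PMF.bind_apply] using this.symm
  · intro t
    rw [key (fun y => g y t), PMF.bind_apply]

theorem lift_pure {X Y : Type} (S : X → PMF Y → Prop) (x : X) (ν : PMF Y)
    (h : S x ν) : Lift S (PMF.pure x) ν := by
  have := lift_bind S (PMF.pure x) (fun _ => ν) (by
    intro y hy
    rw [PMF.support_pure, Set.mem_singleton_iff] at hy
    rw [hy]; exact h)
  rwa [PMF.pure_bind] at this

theorem lift_map {X Y : Type} (f : X → Y) (μ : PMF X) :
    Lift (fun x ν => ν = PMF.pure (f x)) μ (μ.map f) :=
  lift_bind _ μ (fun x => PMF.pure (f x)) (fun _ _ => rfl)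

theorem pprod_map {X Y X' Y' : Type} (f : X → X') (g : Y → Y') (μ : PMF X) (ν : PMF Y) :
    pprod (μ.map f) (ν.map g) = (pprod μ ν).map (fun s => (f s.1, g s.2)) := by
  simp only [pprod, PMF.map_bind, PMF.bind_map, PMF.map_comp]
  rfl

theorem pprod_pure {X Y : Type} (x : X) (y : Y) :
    pprod (PMF.pure x) (PMF.pure y) = PMF.pure (x, y) := by
  simp [pprod, PMF.pure_bind, PMF.pure_map]

/-- The embedding of states used for the interchange law. -/
def emb {σ₁ σ₂ σ₃ σ₄ : Type} :
    (σ₁ × σ₂) ⊕ (σ₃ × σ₄) → (σ₁ ⊕ σ₃) × (σ₂ ⊕ σ₄)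
  | Sum.inl s => (Sum.inl s.1, Sum.inl s.2)
  | Sum.inr s => (Sum.inr s.1, Sum.inr s.2)

theorem map_emb_inl {σ₁ σ₂ σ₃ σ₄ : Type} (μ : PMF σ₁) (ν : PMF σ₂) :
    ((pprod μ ν).map Sum.inl).map (emb (σ₃ := σ₃) (σ₄ := σ₄)) =
      pprod (μ.map Sum.inl) (ν.map Sum.inl) := by
  rw [pprod_map, PMF.map_comp]; rfl

theorem map_emb_inr {σ₁ σ₂ σ₃ σ₄ : Type} (μ : PMF σ₃) (ν : PMF σ₄) :
    ((pprod μ ν).map Sum.inr).map (emb (σ₁ := σ₁) (σ₂ := σ₂)) =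
      pprod (μ.map Sum.inr) (ν.map Sum.inr) := by
  rw [pprod_map, PMF.map_comp]; rfl

/-- the interchange law with respect to simulation:
`(P ∥_A Q) · (P' ∥_A Q') ≤ (P · P') ∥_A (Q · Q')`. -/
theorem interchange_law {α σ₁ σ₂ σ₃ σ₄ : Type}
    (P : PAut α σ₁) (Q : PAut α σ₂) (P' : PAut α σ₃) (Q' : PAut α σ₄)
    (E A : Set α) (hA : A ⊆ E) :
    Sim (pseq (par A P Q) (par A P' Q'))
      (par A (pseq P P') (pseq Q Q')) := by
  refine ⟨fun s ν => ν = PMF.pure (emb s), ?_, ?_, ?_⟩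
  · refine ⟨_, Relation.ReflTransGen.refl, ?_⟩
    have := lift_map (emb (σ₁ := σ₁) (σ₂ := σ₂) (σ₃ := σ₃) (σ₄ := σ₄))
      ((pprod P.init Q.init).map Sum.inl)
    rw [map_emb_inl] at this
    exact this
  · rintro s a μ' ht ν rfl
    refine ⟨μ'.map emb, ?_, lift_map emb μ'⟩
    rcases s with ⟨x, y⟩ | ⟨x, y⟩
    · rcases ht with ⟨_, ⟨μ, ν, rfl, h⟩, rfl⟩ | ⟨rfl, ⟨hx, hy⟩, rfl⟩
      · refine ⟨_, _, Relation.ReflTransGen.refl, lift_pure _ _ _ (Or.inl ?_),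
          Relation.ReflTransGen.refl⟩
        refine ⟨μ.map Sum.inl, ν.map Sum.inl, map_emb_inl μ ν, ?_⟩
        rcases h with ⟨b, hb, ha, h1, h2⟩ | ⟨ha, h1, rfl⟩ | ⟨ha, h1, rfl⟩
        · exact Or.inl ⟨b, hb, ha, Or.inl ⟨μ, h1, rfl⟩, Or.inl ⟨ν, h2, rfl⟩⟩
        · exact Or.inr (Or.inl ⟨ha, Or.inl ⟨μ, h1, rfl⟩, PMF.pure_map _ _⟩)
        · exact Or.inr (Or.inr ⟨ha, Or.inl ⟨ν, h1, rfl⟩, PMF.pure_map _ _⟩)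
      · refine ⟨_, pprod (P'.init.map Sum.inr) (PMF.pure (Sum.inl y)),
          Relation.ReflTransGen.refl, lift_pure _ _ _ (Or.inl ?_),
          Relation.ReflTransGen.single ?_⟩
        · exact ⟨_, _, rfl, Or.inr (Or.inl ⟨by simp, Or.inr ⟨rfl, hx, rfl⟩, rfl⟩)⟩
        · have e1 : pprod (P'.init.map Sum.inr) (PMF.pure (Sum.inl y : σ₂ ⊕ σ₄)) =
              P'.init.map (fun x => ((Sum.inr x : σ₁ ⊕ σ₃), (Sum.inl y : σ₂ ⊕ σ₄))) := by
            simp only [pprod, PMF.bind_map, PMF.pure_map]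
            rfl
          have e2 : ((par A P' Q').init.map Sum.inr).map (emb (σ₁ := σ₁) (σ₂ := σ₂)) =
              (pprod (P'.init.map Sum.inr) (PMF.pure (Sum.inl y : σ₂ ⊕ σ₄))).bind
                (fun s => pprod (PMF.pure s.1) (Q'.init.map Sum.inr)) := by
            refine (map_emb_inr P'.init Q'.init).trans ?_
            rw [e1]
            simp only [pprod, PMF.bind_map, PMF.pure_bind]
            rfl
          rw [e2]
          apply lift_bind
          intro s hs
          rw [e1, PMF.mem_support_map_iff] at hs
          obtain ⟨x', -, rfl⟩ := hs
          exact Or.inl ⟨_, _, rfl, Or.inr (Or.inr ⟨by simp, Or.inr ⟨rfl, hy, rfl⟩, rfl⟩)⟩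
    · obtain ⟨_, ⟨μ, ν, rfl, h⟩, rfl⟩ := ht
      refine ⟨_, _, Relation.ReflTransGen.refl, lift_pure _ _ _ (Or.inl ?_),
        Relation.ReflTransGen.refl⟩
      refine ⟨μ.map Sum.inr, ν.map Sum.inr, map_emb_inr μ ν, ?_⟩
      rcases h with ⟨b, hb, ha, h1, h2⟩ | ⟨ha, h1, rfl⟩ | ⟨ha, h1, rfl⟩
      · exact Or.inl ⟨b, hb, ha, ⟨μ, h1, rfl⟩, ⟨ν, h2, rfl⟩⟩
      · exact Or.inr (Or.inl ⟨ha, ⟨μ, h1, rfl⟩, PMF.pure_map _ _⟩)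
      · exact Or.inr (Or.inr ⟨ha, ⟨ν, h1, rfl⟩, PMF.pure_map _ _⟩)
  · rintro s ν ⟨⟨x, y⟩, ⟨hx, hy⟩, rfl⟩ rfl
    refine ⟨_, Relation.ReflTransGen.refl, ?_⟩
    intro z hz
    rw [PMF.support_pure, Set.mem_singleton_iff] at hz
    subst hz
    exact ⟨⟨x, hx, rfl⟩, ⟨y, hy, rfl⟩⟩

end PCKA
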